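/- Let n ≥ 3. There exists a bound q₀ (depending on n) such that for every finite field F with |F| ≥ q₀ and char F ≠ 2, there is no bijective map Ψ : M_n(F) → M_n(F) satisfying per Ψ(A) = det A for all A ∈ M_n(F). -/

import Mathlib

/-!
Over a finite field with `q` elements, a uniformly random `n × n` matrix has vanishing determinant
with probability at least `1/q + 1/q² - 1/q³`. If `2 ≠ 0` and `n ≥ 3`, its permanent vanishes with
probability only `1/q + O(1/q³)`, so for large `q` the zero sets have different sizes.

Expose the rows of the matrix one at a time. The permanent is a linear form in the last row, whose
coefficients are the maximal subpermanents of the other `n - 1` rows. Unless all of these vanish,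
it is zero with probability at most `1/q`. Hence it suffices that they all vanish with probability
`O(1/q³)`. For determinants this event is rank deficiency, of probability about `1/q²`. For
permanents the extra factor comes from the signs. Let `u, v, w` be the subpermanents of the first
`n - 2` rows obtained by deleting two of three fixed columns. Once the other entries of row `n - 1`
are chosen, the vanishing of the subpermanents is a linear system of determinant `±2uvw` for its
entries in these three columns, so if `u, v, w ≠ 0` it has probability at most `1/q³`. Otherwise,
which happens with probability `O(1/q)`, it typically still has probability at most `1/q²`.
-/

open Finset Function Matrix
open scoped BigOperators

section Density

variable {α : Type*} [Fintype α] {k : ℕ}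

theorem dens_filter_vecCons (P : (Fin (k + 1) → α) → Prop) [DecidablePred P] :
    dens {A | P A} = 𝔼 B : Fin k → α, dens {x | P (vecCons x B)} := by
  have hcard : #{A | P A} = ∑ B : Fin k → α, #{x : α | P (vecCons x B)} := by
    simp_rw [card_filter]
    rw [← (Fin.consEquiv fun _ => α).sum_comp, Fintype.sum_prod_type_right]
    rfl
  rw [Fintype.expect_eq_sum_div_card, dens, hcard]
  simp_rw [dens, ← sum_div, div_div]
  simp [pow_succ']

theorem dens_filter_vecCons_le [Nonempty α] (P : (Fin (k + 1) → α) → Prop)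
    (Q R : (Fin k → α) → Prop) [DecidablePred P] [DecidablePred Q] [DecidablePred R] {δ ε : ℚ≥0}
    (hδ : ∀ B, ¬ Q B → dens {x | P (vecCons x B)} ≤ δ)
    (hε : ∀ B, ¬ Q B → ¬ R B → dens {x | P (vecCons x B)} ≤ ε) :
    dens {A | P A} ≤ dens {B | Q B} + dens {B | R B} * δ + ε := by
  have hfiber (B : Fin k → α) : dens {x | P (vecCons x B)} ≤
      (if Q B then 1 else 0) + (if R B then 1 else 0) * δ + ε := by
    by_cases hQ : Q B
    · exact dens_le_one.trans (by simp [hQ, add_assoc])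
    by_cases hR : R B
    · exact (hδ B hQ).trans (by simp [hQ, hR])
    · exact (hε B hQ hR).trans (by simp [hQ, hR])
  have hdens (Q : (Fin k → α) → Prop) [DecidablePred Q] :
      𝔼 B, (if Q B then (1 : ℚ≥0) else 0) = dens {B | Q B} := by
    rw [Fintype.expect_eq_sum_div_card, sum_boole, dens]
  calc
    dens {A | P A} = 𝔼 B : Fin k → α, dens {x | P (vecCons x B)} := dens_filter_vecCons P
    _ ≤ 𝔼 B, ((if Q B then 1 else 0) + (if R B then 1 else 0) * δ + ε) :=
      expect_le_expect fun B _ => hfiber B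
    _ = dens {B | Q B} + dens {B | R B} * δ + ε := by
      rw [expect_add_distrib, expect_add_distrib, ← expect_mul, hdens, hdens, Fintype.expect_const]

theorem dens_filter_vecCons_le_add [Nonempty α] (P : (Fin (k + 1) → α) → Prop)
    (Q : (Fin k → α) → Prop) [DecidablePred P] [DecidablePred Q] {ε : ℚ≥0}
    (hε : ∀ B, ¬ Q B → dens {x | P (vecCons x B)} ≤ ε) :
    dens {A | P A} ≤ dens {B | Q B} + ε := by
  simpa using dens_filter_vecCons_le P Q (fun _ => False) hε fun B hB _ => hε B hB

theorem dens_le_inv_card_pow_of_eqOn_compl [Nonempty α] {ι : Type*} [Fintype ι] [DecidableEq ι]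
    (T : Finset ι) (A : Finset (ι → α))
    (hA : ∀ x ∈ A, ∀ y ∈ A, (∀ i ∉ T, x i = y i) → x = y) :
    dens A ≤ (Fintype.card α : ℚ≥0)⁻¹ ^ #T := by
  have hcard : #A ≤ Fintype.card ({i // i ∉ T} → α) := by
    rw [← card_univ]
    exact card_le_card_of_injOn (fun x i => x i) (by simp) fun x hx y hy hxy =>
      hA x hx y hy fun i hi => congrFun hxy ⟨i, hi⟩
  rw [Fintype.card_fun, Fintype.card_subtype_compl, Fintype.card_coe] at hcard
  rw [dens, Fintype.card_fun, div_le_iff₀ (by positivity), inv_pow, inv_mul_eq_div,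
    le_div_iff₀ (by positivity)]
  norm_cast
  calc
    #A * Fintype.card α ^ #T ≤ Fintype.card α ^ (Fintype.card ι - #T) * Fintype.card α ^ #T := by
      gcongr
    _ = Fintype.card α ^ Fintype.card ι := by rw [← pow_add, Nat.sub_add_cancel T.card_le_univ]

end Density

section RectPermanent

variable {R ι : Type*} [CommSemiring R] [DecidableEq ι] {k : ℕ}

/-- The permanent of the rectangular matrix formed by the columns of `B` in `S`: the sum, over the
injective maps from the rows to `S`, of the products of the selected entries. It is the ordinary
permanent of a square matrix when `#S = k`. The matrix `B` is given as the tuple of its rows, to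
which further rows are prepended by `vecCons`. -/
def rectPermanent (B : Fin k → ι → R) (S : Finset ι) : R :=
  ∑ f ∈ Fintype.piFinset fun _ : Fin k => S with Injective f, ∏ i, B i (f i)

theorem rectPermanent_fin_zero (B : Fin 0 → ι → R) (S : Finset ι) : rectPermanent B S = 1 := by
  simp [rectPermanent, injective_of_subsingleton]

theorem rectPermanent_vecCons (x : ι → R) (B : Fin k → ι → R) (S : Finset ι) :
    rectPermanent (vecCons x B) S = ∑ i ∈ S, x i * rectPermanent B (S.erase i) := by
  simp_rw [rectPermanent, mul_sum, sum_sigma']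
  refine sum_bij' (fun f _ => ⟨f 0, Fin.tail f⟩) (fun p _ => Fin.cons p.1 p.2) ?_ ?_ ?_ ?_ ?_
  · intro f hf
    obtain ⟨hS, hf⟩ := by simpa using hf
    rw [← Fin.cons_self_tail f, Fin.cons_injective_iff] at hf
    simp_all [Fin.tail, Set.mem_range]
  · rintro ⟨i, g⟩ hg
    simp_all [Fin.cons_injective_iff, Fin.forall_fin_succ]
  · simp
  · simp
  · intro f _
    simp [Fin.prod_univ_succ, Fin.tail]

theorem rectPermanent_univ {n : ℕ} (A : Matrix (Fin n) (Fin n) R) :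
    rectPermanent A univ = A.permanent := by
  rw [← A.permanent_transpose]
  unfold rectPermanent permanent
  refine Eq.symm <| sum_bij (fun σ _ => ⇑σ) ?_ ?_ ?_ ?_
  · simp [Equiv.injective]
  · simp
  · intro f hf
    have hf : Bijective f := Finite.injective_iff_bijective.1 (mem_filter.1 hf).2
    exact ⟨Equiv.ofBijective f hf, mem_univ _, rfl⟩
  · simp

/-- All maximal subpermanents of `B` in the columns of `S` vanish, that is, the permanents of the
square submatrices formed by all `k` rows and by `k` columns in `S`. -/
def SubpermanentsVanish (B : Fin k → ι → R) (S : Finset ι) : Prop :=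
  ∀ T ⊆ S, #T = k → rectPermanent B T = 0

theorem subpermanentsVanish_iff {B : Fin k → ι → R} {S : Finset ι} (hS : #S = k) :
    SubpermanentsVanish B S ↔ rectPermanent B S = 0 := by
  refine ⟨fun h => h S subset_rfl hS, fun h T hT hk => ?_⟩
  rwa [eq_of_subset_of_card_le hT (hS.trans hk.symm).le]

end RectPermanent

namespace SubpermanentsVanish

variable {R ι : Type*} [DecidableEq ι] {k : ℕ} {S : Finset ι}

theorem vecCons_sub [CommRing R] {x y : ι → R} {B : Fin k → ι → R}
    (hx : SubpermanentsVanish (vecCons x B) S) (hy : SubpermanentsVanish (vecCons y B) S) :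
    SubpermanentsVanish (vecCons (x - y) B) S := fun T hT hk => by
  have hx := hx T hT hk
  have hy := hy T hT hk
  rw [rectPermanent_vecCons] at hx hy ⊢
  simp_rw [Pi.sub_apply, sub_mul, sum_sub_distrib, hx, hy, sub_zero]

theorem mul_rectPermanent_eq_zero [CommSemiring R] {x : ι → R} {B : Fin k → ι → R}
    (hx : SubpermanentsVanish (vecCons x B) S) {W : Finset ι} (hWS : W ⊆ S) (hW : #W = k)
    (hxW : ∀ i ∈ W, x i = 0) {a : ι} (ha : a ∈ S \ W) : x a * rectPermanent B W = 0 := by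
  obtain ⟨haS, haW⟩ := mem_sdiff.1 ha
  have h := hx (insert a W) (insert_subset haS hWS) (by rw [card_insert_of_notMem haW, hW])
  rw [rectPermanent_vecCons, sum_insert haW, erase_insert haW] at h
  rwa [sum_eq_zero fun i hi => by rw [hxW i hi, zero_mul], add_zero] at h

theorem mul_add_mul_eq_zero [CommSemiring R] {x : ι → R} {B : Fin k → ι → R}
    (hx : SubpermanentsVanish (vecCons x B) S) (hS : #S = k + 2) {a b c : ι} (ha : a ∈ S)
    (hb : b ∈ S) (hc : c ∈ S) (hab : a ≠ b) (hac : a ≠ c) (hbc : b ≠ c)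
    (off : ∀ i, i ≠ a → i ≠ b → i ≠ c → x i = 0) :
    x a * rectPermanent B ((S.erase a).erase c) + x b * rectPermanent B ((S.erase b).erase c) =
      0 := by
  have h := hx (S.erase c) (erase_subset c S) (by rw [card_erase_of_mem hc, hS]; rfl)
  rw [rectPermanent_vecCons, sum_eq_add_of_mem a b (mem_erase.2 ⟨hac, ha⟩) (mem_erase.2 ⟨hbc, hb⟩)
    hab fun i hi hne => by rw [off i hne.1 hne.2 (mem_erase.1 hi).1, zero_mul]] at h
  rwa [erase_right_comm (a := a), erase_right_comm (a := b)]

theorem eq_zero_of_three_rectPermanent_ne_zero [CommRing R] [NoZeroDivisors R] (h2 : (2 : R) ≠ 0)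
    {x : ι → R} {B : Fin k → ι → R} (hx : SubpermanentsVanish (vecCons x B) S) (hS : #S = k + 2)
    {a b c : ι} (ha : a ∈ S) (hb : b ∈ S) (hc : c ∈ S) (hab : a ≠ b) (hac : a ≠ c) (hbc : b ≠ c)
    (hu : rectPermanent B ((S.erase a).erase b) ≠ 0)
    (hv : rectPermanent B ((S.erase a).erase c) ≠ 0)
    (hw : rectPermanent B ((S.erase b).erase c) ≠ 0)
    (off : ∀ i, i ≠ a → i ≠ b → i ≠ c → x i = 0) : x = 0 := by
  have h_ab := hx.mul_add_mul_eq_zero hS ha hb hc hab hac hbc off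
  have h_ac := hx.mul_add_mul_eq_zero hS ha hc hb hac hab hbc.symm
    fun i h₁ h₂ h₃ => off i h₁ h₃ h₂
  have h_bc := hx.mul_add_mul_eq_zero hS hb hc ha hbc hab.symm hac.symm
    fun i h₁ h₂ h₃ => off i h₃ h₁ h₂
  rw [erase_right_comm (a := c)] at h_ac h_bc
  rw [erase_right_comm (a := b)] at h_bc
  set u := rectPermanent B ((S.erase a).erase b)
  set v := rectPermanent B ((S.erase a).erase c)
  set w := rectPermanent B ((S.erase b).erase c)
  have hxa : x a = 0 := by
    have : 2 * u * v * x a = 0 := by linear_combination u * h_ab + v * h_ac - w * h_bc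
    simpa [h2, hu, hv] using this
  have hxb : x b = 0 := by simpa [hxa, hw] using h_ab
  have hxc : x c = 0 := by simpa [hxa, hw] using h_ac
  funext i
  by_cases hi : i = a ∨ i = b ∨ i = c
  · rcases hi with rfl | rfl | rfl <;> assumption
  · push Not at hi
    exact off i hi.1 hi.2.1 hi.2.2

end SubpermanentsVanish

section Permanent

variable {F ι : Type*} [Field F] [Fintype F] [Fintype ι] [DecidableEq ι] {k m : ℕ} {S : Finset ι}

local notation "q" => (Fintype.card F : ℚ≥0)

open scoped Classical in
theorem dens_subpermanentsVanish_vecCons_le (B : Fin k → ι → F) (S T : Finset ι)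
    (hT : ∀ d : ι → F, SubpermanentsVanish (vecCons d B) S → (∀ i ∉ T, d i = 0) → d = 0) :
    dens {x : ι → F | SubpermanentsVanish (vecCons x B) S} ≤ q⁻¹ ^ #T := by
  refine dens_le_inv_card_pow_of_eqOn_compl T _ fun x hx y hy hxy => sub_eq_zero.1 ?_
  simp only [mem_filter, mem_univ, true_and] at hx hy
  exact hT _ (hx.vecCons_sub hy) fun i hi => sub_eq_zero.2 (hxy i hi)

open scoped Classical in
theorem dens_subpermanentsVanish_vecCons_le_of_not (hS : #S = k + m) {B : Fin k → ι → F}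
    (hB : ¬ SubpermanentsVanish B S) :
    dens {x : ι → F | SubpermanentsVanish (vecCons x B) S} ≤ q⁻¹ ^ m := by
  simp only [SubpermanentsVanish, not_forall] at hB
  obtain ⟨W, hWS, hW, hBW⟩ := hB
  have hm : #(S \ W) = m := by rw [card_sdiff_of_subset hWS, hS, hW, Nat.add_sub_cancel_left]
  rw [← hm]
  refine dens_subpermanentsVanish_vecCons_le B S (S \ W) fun d hd off => funext fun i => ?_
  by_cases hi : i ∈ S \ W
  · have hdW : ∀ i ∈ W, d i = 0 := fun i hi => off i fun h => (mem_sdiff.1 h).2 hi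
    exact (mul_eq_zero.1 (hd.mul_rectPermanent_eq_zero hWS hW hdW hi)).resolve_right hBW
  · exact off i hi

open scoped Classical in
theorem dens_subpermanentsVanish_le (hS : #S = k + m) :
    dens {B : Fin k → ι → F | SubpermanentsVanish B S} ≤ k * q⁻¹ ^ (m + 1) := by
  induction k generalizing m with
  | zero => simp [SubpermanentsVanish, rectPermanent_fin_zero]
  | succ k ih =>
    have hS : #S = k + (m + 1) := by lia
    have hq : q⁻¹ ≤ 1 := Nat.cast_inv_le_one _
    calc
      dens {A : Fin (k + 1) → ι → F | SubpermanentsVanish A S}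
      _ ≤ dens {B : Fin k → ι → F | SubpermanentsVanish B S} + q⁻¹ ^ (m + 1) :=
        dens_filter_vecCons_le_add (fun A => SubpermanentsVanish A S)
          (fun B => SubpermanentsVanish B S)
          fun B hB => dens_subpermanentsVanish_vecCons_le_of_not hS hB
      _ ≤ k * q⁻¹ ^ (m + 2) + q⁻¹ ^ (m + 1) := by gcongr; exact ih hS
      _ ≤ k * q⁻¹ ^ (m + 1) + q⁻¹ ^ (m + 1) := by
        gcongr k * ?_ + _
        exact pow_le_pow_of_le_one zero_le hq (Nat.le_succ _)
      _ = (k + 1 : ℕ) * q⁻¹ ^ (m + 1) := by push_cast; ring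

open scoped Classical in
theorem dens_subpermanentsVanish_vecCons_le_cube (h2 : (2 : F) ≠ 0) (hS : #S = k + 2)
    {B : Fin k → ι → F} {a b c : ι} (ha : a ∈ S) (hb : b ∈ S) (hc : c ∈ S) (hab : a ≠ b)
    (hac : a ≠ c) (hbc : b ≠ c)
    (hu : rectPermanent B ((S.erase a).erase b) ≠ 0)
    (hv : rectPermanent B ((S.erase a).erase c) ≠ 0)
    (hw : rectPermanent B ((S.erase b).erase c) ≠ 0) :
    dens {x : ι → F | SubpermanentsVanish (vecCons x B) S} ≤ q⁻¹ ^ 3 := by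
  rw [← card_eq_three.2 ⟨a, b, c, hab, hac, hbc, rfl⟩]
  exact dens_subpermanentsVanish_vecCons_le B S {a, b, c} fun d hd off =>
    hd.eq_zero_of_three_rectPermanent_ne_zero h2 hS ha hb hc hab hac hbc hu hv hw
      fun i h₁ h₂ h₃ => off i (by simp [h₁, h₂, h₃])

open scoped Classical in
theorem dens_subpermanentsVanish_le_cube (h2 : (2 : F) ≠ 0) (hk : 1 ≤ k) (hS : #S = k + 2) :
    dens {A : Fin (k + 1) → ι → F | SubpermanentsVanish A S} ≤ (4 * k + 1) * q⁻¹ ^ 3 := by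
  obtain ⟨a, ha, b, hb, c, hc, hab, hac, hbc⟩ := two_lt_card.1 (show 2 < #S by lia)
  let pairVanish (a b : ι) (B : Fin k → ι → F) : Prop :=
    rectPermanent B ((S.erase a).erase b) = 0
  have hpair {a b : ι} (ha : a ∈ S) (hb : b ∈ S) (hab : a ≠ b) :
      dens {B | pairVanish a b B} ≤ k * q⁻¹ := by
    have hcard : #((S.erase a).erase b) = k := by
      rw [card_erase_of_mem (mem_erase.2 ⟨hab.symm, hb⟩), card_erase_of_mem ha, hS]; rfl
    simpa [subpermanentsVanish_iff hcard] using dens_subpermanentsVanish_le (F := F) (m := 0) hcard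
  have hbad : dens {B | pairVanish a b B ∨ pairVanish a c B ∨ pairVanish b c B} ≤
      3 * k * q⁻¹ := by
    simp_rw [filter_or]
    calc
      _ ≤ _ := (dens_union_le _ _).trans (add_le_add_right (dens_union_le _ _) _)
      _ ≤ k * q⁻¹ + (k * q⁻¹ + k * q⁻¹) := by
        gcongr
        exacts [hpair ha hb hab, hpair ha hc hac, hpair hb hc hbc]
      _ = 3 * k * q⁻¹ := by ring
  calc
    dens {A : Fin (k + 1) → ι → F | SubpermanentsVanish A S}
    _ ≤ dens {B : Fin k → ι → F | SubpermanentsVanish B S} +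
          dens {B | pairVanish a b B ∨ pairVanish a c B ∨ pairVanish b c B} * q⁻¹ ^ 2 + q⁻¹ ^ 3 :=
      dens_filter_vecCons_le (fun A => SubpermanentsVanish A S)
        (fun B => SubpermanentsVanish B S) _
        (fun B hB => dens_subpermanentsVanish_vecCons_le_of_not hS hB) fun B _ hB => by
          push Not at hB
          exact dens_subpermanentsVanish_vecCons_le_cube h2 hS ha hb hc hab hac hbc
            hB.1 hB.2.1 hB.2.2
    _ ≤ k * q⁻¹ ^ 3 + 3 * k * q⁻¹ * q⁻¹ ^ 2 + q⁻¹ ^ 3 := by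
      gcongr
      exact dens_subpermanentsVanish_le hS
    _ = (4 * k + 1) * q⁻¹ ^ 3 := by ring

variable (F) [DecidableEq F]

theorem dens_permanent_eq_zero_le (h2 : (2 : F) ≠ 0) (hk : 1 ≤ k) :
    dens {A : Matrix (Fin (k + 2)) (Fin (k + 2)) F | A.permanent = 0} ≤
      q⁻¹ + (4 * k + 1) * q⁻¹ ^ 3 := by
  classical
  have hvanish (A : Fin (k + 2) → Fin (k + 2) → F) :
      SubpermanentsVanish A univ ↔ permanent (of A) = 0 := by
    rw [subpermanentsVanish_iff (card_fin _), ← rectPermanent_univ]; rfl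
  have hcard : #(univ : Finset (Fin (k + 2))) = k + 1 + 1 := card_fin _
  calc
    dens {A : Matrix (Fin (k + 2)) (Fin (k + 2)) F | A.permanent = 0}
    _ = dens {A : Fin (k + 2) → Fin (k + 2) → F | SubpermanentsVanish A univ} := by
      simp_rw [hvanish]; rfl
    _ ≤ dens {B : Fin (k + 1) → Fin (k + 2) → F | SubpermanentsVanish B univ} + q⁻¹ ^ 1 :=
      dens_filter_vecCons_le_add (fun A => SubpermanentsVanish A univ)
        (fun B => SubpermanentsVanish B univ)
        fun B hB => dens_subpermanentsVanish_vecCons_le_of_not hcard hB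
    _ ≤ (4 * k + 1) * q⁻¹ ^ 3 + q⁻¹ ^ 1 := by
      gcongr
      exact dens_subpermanentsVanish_le_cube h2 hk hcard
    _ = q⁻¹ + (4 * k + 1) * q⁻¹ ^ 3 := by ring

end Permanent

section Determinant

variable (F : Type*) [Field F] [Fintype F] [DecidableEq F]

local notation "q" => (Fintype.card F : ℚ)

theorem card_det_ne_zero (n : ℕ) :
    #{A : Matrix (Fin n) (Fin n) F | A.det ≠ 0} =
      ∏ i : Fin n, (Fintype.card F ^ n - Fintype.card F ^ (i : ℕ)) := by
  rw [← card_GL_field, ← Fintype.card_subtype, ← Nat.card_eq_fintype_card]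
  exact Nat.card_congr
    { toFun A := GeneralLinearGroup.mkOfDetNeZero A.1 A.2
      invFun g := ⟨g.1, g.det_ne_zero⟩
      left_inv _ := rfl
      right_inv _ := Units.ext rfl }

theorem dens_det_ne_zero (n : ℕ) :
    (dens {A : Matrix (Fin n) (Fin n) F | A.det ≠ 0} : ℚ) =
      ∏ i : Fin n, (1 - q⁻¹ ^ (i + 1 : ℕ)) := by
  have hq : q ≠ 0 := Nat.cast_ne_zero.2 Fintype.card_ne_zero
  have hcard : (Fintype.card (Matrix (Fin n) (Fin n) F) : ℚ) = ∏ _i : Fin n, q ^ n := by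
    rw [← Nat.card_eq_fintype_card (α := Matrix _ _ _)]
    simp [Matrix]
  rw [nnratCast_dens, card_det_ne_zero, hcard, Nat.cast_prod, ← prod_div_distrib,
    ← Equiv.prod_comp Fin.revPerm]
  refine prod_congr rfl fun i _ => ?_
  have hi : q ^ n = q ^ (Fin.rev i : ℕ) * q ^ (i + 1 : ℕ) := by
    rw [← pow_add, Fin.val_rev, Nat.sub_add_cancel i.is_lt]
  rw [Fin.revPerm_apply, Nat.cast_sub (Nat.pow_le_pow_right Fintype.card_pos (Fin.rev i).is_lt.le),
    Nat.cast_pow, Nat.cast_pow, sub_div, div_self (pow_ne_zero n hq), hi,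
    div_mul_cancel_left₀ (pow_ne_zero _ hq), inv_pow]

theorem le_dens_det_eq_zero {n : ℕ} (hn : 2 ≤ n) :
    q⁻¹ + q⁻¹ ^ 2 - q⁻¹ ^ 3 ≤ (dens {A : Matrix (Fin n) (Fin n) F | A.det = 0} : ℚ) := by
  obtain ⟨m, rfl⟩ := Nat.exists_eq_add_of_le' hn
  have hq : q⁻¹ ≤ 1 := Nat.cast_inv_le_one _
  have hfactor (i : ℕ) : 0 ≤ 1 - q⁻¹ ^ i ∧ 1 - q⁻¹ ^ i ≤ 1 :=
    ⟨sub_nonneg.2 (pow_le_one₀ (by positivity) hq), sub_le_self 1 (by positivity)⟩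
  have hne : (dens {A : Matrix (Fin (m + 2)) (Fin (m + 2)) F | A.det ≠ 0} : ℚ) ≤
      (1 - q⁻¹) * (1 - q⁻¹ ^ 2) := by
    rw [dens_det_ne_zero, Fin.prod_univ_succ, Fin.prod_univ_succ, ← mul_assoc]
    refine (mul_le_of_le_one_right (mul_nonneg (hfactor _).1 (hfactor _).1)
      (prod_le_one (fun i _ => (hfactor _).1) fun i _ => (hfactor _).2)).trans_eq ?_
    simp
  have hsum : (dens {A : Matrix (Fin (m + 2)) (Fin (m + 2)) F | A.det = 0} : ℚ) +
      dens {A : Matrix (Fin (m + 2)) (Fin (m + 2)) F | A.det ≠ 0} = 1 := by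
    rw [← NNRat.cast_add, dens_filter_add_dens_filter_not_eq_dens, dens_univ, NNRat.cast_one]
  linear_combination hne - hsum

theorem dens_permanent_eq_zero_lt_dens_det_eq_zero {n : ℕ} (hn : 3 ≤ n)
    (h2 : (2 : F) ≠ 0) (hq : 4 * n ≤ Fintype.card F) :
    dens {A : Matrix (Fin n) (Fin n) F | A.permanent = 0} <
      dens {A : Matrix (Fin n) (Fin n) F | A.det = 0} := by
  obtain ⟨k, rfl⟩ := Nat.exists_eq_add_of_le' (show 2 ≤ n by lia)
  have hper : (dens {A : Matrix (Fin (k + 2)) (Fin (k + 2)) F | A.permanent = 0} : ℚ) ≤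
      q⁻¹ + (4 * k + 1) * q⁻¹ ^ 3 := by
    exact_mod_cast dens_permanent_eq_zero_le F h2 (show 1 ≤ k by lia)
  have hcompare : q⁻¹ + (4 * k + 1) * q⁻¹ ^ 3 < q⁻¹ + q⁻¹ ^ 2 - q⁻¹ ^ 3 := by
    have hq_pos : 0 < q := Nat.cast_pos.2 Fintype.card_pos
    have hlt : (4 * k + 2) * q⁻¹ < 1 := by
      rw [← div_eq_mul_inv, div_lt_one hq_pos]
      exact_mod_cast (show 4 * k + 2 < Fintype.card F by lia)
    calc
      q⁻¹ + (4 * k + 1) * q⁻¹ ^ 3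
      _ = q⁻¹ + (4 * k + 2) * q⁻¹ * q⁻¹ ^ 2 - q⁻¹ ^ 3 := by ring
      _ < q⁻¹ + 1 * q⁻¹ ^ 2 - q⁻¹ ^ 3 := by gcongr
      _ = q⁻¹ + q⁻¹ ^ 2 - q⁻¹ ^ 3 := by ring
  exact NNRat.cast_lt.1 ((hper.trans_lt hcompare).trans_le (le_dens_det_eq_zero F (by lia)))

end Determinant

/-- For `n ≥ 3` there is a bound `q₀` (depending on `n`) such that for every finite field
`F` with at least `q₀` elements and characteristic different from `2`, no bijective map
`Ψ : Mₙ(F) → Mₙ(F)` satisfies `per (Ψ A) = det A` for all `A`. -/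
theorem no_bijective_determinant_to_permanent_converter (n : ℕ) (hn : 3 ≤ n) :
    ∃ q₀ : ℕ, ∀ (F : Type) [Field F] [Fintype F],
      q₀ ≤ Fintype.card F → ringChar F ≠ 2 →
      ¬ ∃ Ψ : Matrix (Fin n) (Fin n) F → Matrix (Fin n) (Fin n) F,
          Function.Bijective Ψ ∧ ∀ A, (Ψ A).permanent = A.det := by
  classical
  refine ⟨4 * n, fun F _ _ hq hchar ⟨Ψ, hΨ, hper⟩ => ?_⟩
  have hlt := dens_permanent_eq_zero_lt_dens_det_eq_zero F hn (Ring.two_ne_zero hchar) hq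
  have hcard : #{A : Matrix (Fin n) (Fin n) F | A.det = 0} =
      #{A : Matrix (Fin n) (Fin n) F | A.permanent = 0} :=
    card_bijective Ψ hΨ fun A => by simp [hper]
  exact hlt.ne (by rw [dens, dens, hcard])
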